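/- arXiv:2411.06427 — 5 statements merged into one kernel-verified Lean document; each statement's English description precedes it below -/
import Mathlib

section
/- Let S ⊆ V be nonempty and let v ∈ V ∖ S. Then RQ(S ∪ {v}) ≥ RQ(S) if and only if Δ_S(v) ≥ RQ(S). -/
open scoped Classical

/-- The value `(x p - x q)^2` of an unordered pair/edge. -/
noncomputable def edgeVal {V : Type*} (x : V → ℝ) : Sym2 V → ℝ :=
  Sym2.lift ⟨fun p q => (x p - x q) ^ 2, fun p q => by ring⟩

/-- Rayleigh quotient of the subgraph induced on `S`:
numerator sums `(x p - x q)^2` over unordered edges of `G` with both endpoints in `S`. -/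
noncomputable def RQ {V : Type*} [Fintype V] [DecidableEq V]
    (G : SimpleGraph V) (x : V → ℝ) (S : Finset V) : ℝ :=
  (∑ e ∈ G.edgeFinset.filter (fun e => ∀ v ∈ e, v ∈ S), edgeVal x e) /
    (∑ p ∈ S, x p ^ 2)

/-- Increment of a single node `v` relative to `S`. -/
noncomputable def deltaNode {V : Type*} [Fintype V] [DecidableEq V]
    (G : SimpleGraph V) (x : V → ℝ) (S : Finset V) (v : V) : ℝ :=
  (∑ r ∈ S.filter (fun r => G.Adj v r), (x v - x r) ^ 2) / (x v) ^ 2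

/-- Increment of a nodeset `T` (disjoint from `S`) relative to `S`:
cross edges between `T` and `S` plus edges internal to `T`, over the mass of `T`. -/
noncomputable def deltaSet {V : Type*} [Fintype V] [DecidableEq V]
    (G : SimpleGraph V) (x : V → ℝ) (S T : Finset V) : ℝ :=
  ((∑ v ∈ T, ∑ r ∈ S.filter (fun r => G.Adj v r), (x v - x r) ^ 2) +
      ∑ e ∈ G.edgeFinset.filter (fun e => ∀ w ∈ e, w ∈ T), edgeVal x e) /
    (∑ v ∈ T, x v ^ 2)

/-- Adding `v` to `S` adds exactly the edges from `v` into `S`. -/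
theorem edge_sum_insert {V : Type*} [Fintype V] [DecidableEq V]
    (G : SimpleGraph V) (x : V → ℝ) (S : Finset V) (v : V) (hv : v ∉ S) :
    ∑ e ∈ G.edgeFinset.filter (fun e => ∀ w ∈ e, w ∈ insert v S), edgeVal x e =
      ∑ e ∈ G.edgeFinset.filter (fun e => ∀ w ∈ e, w ∈ S), edgeVal x e +
      ∑ r ∈ S.filter (fun r => G.Adj v r), (x v - x r) ^ 2 := by
  have himg : ∑ r ∈ S.filter (fun r => G.Adj v r), (x v - x r) ^ 2 =
      ∑ e ∈ (S.filter (fun r => G.Adj v r)).image (fun r => s(v, r)), edgeVal x e := by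
    rw [Finset.sum_image]
    · rfl
    · intro a _ b _ h
      exact Sym2.congr_right.mp h
  rw [himg, ← Finset.sum_union]
  · apply Finset.sum_congr _ (fun _ _ => rfl)
    ext e
    induction e using Sym2.ind with
    | _ p q =>
      simp only [Finset.mem_filter, Finset.mem_union, Finset.mem_image, Finset.mem_insert,
        SimpleGraph.mem_edgeFinset, SimpleGraph.mem_edgeSet, Sym2.mem_iff, Sym2.eq_iff,
        forall_eq_or_imp, forall_eq]
      constructor
      · rintro ⟨h, rfl | hp, rfl | hq⟩
        · exact absurd h (G.loopless.irrefl _)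
        · exact Or.inr ⟨q, ⟨hq, h⟩, Or.inl ⟨rfl, rfl⟩⟩
        · exact Or.inr ⟨p, ⟨hp, h.symm⟩, Or.inr ⟨rfl, rfl⟩⟩
        · exact Or.inl ⟨h, hp, hq⟩
      · rintro (⟨h, hp, hq⟩ | ⟨r, ⟨hr, h⟩, ⟨rfl, rfl⟩ | ⟨rfl, rfl⟩⟩)
        · exact ⟨h, Or.inr hp, Or.inr hq⟩
        · exact ⟨h, Or.inl rfl, Or.inr hr⟩
        · exact ⟨h.symm, Or.inr hr, Or.inl rfl⟩
  · rw [Finset.disjoint_left]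
    intro e he he'
    obtain ⟨r, _, rfl⟩ := Finset.mem_image.mp he'
    exact hv ((Finset.mem_filter.mp he).2 v (Sym2.mem_mk_left v r))

/-- **Non-strict variant of Theorem 1.** For nonempty `S` and `v ∉ S`,
`RQ (insert v S) ≥ RQ S` iff `Δ_S(v) ≥ RQ S`. -/
theorem rq_insert_ge_iff {V : Type*} [Fintype V] [DecidableEq V]
    (G : SimpleGraph V) (x : V → ℝ) (hx : ∀ v, x v ≠ 0)
    (S : Finset V) (hS : S.Nonempty) (v : V) (hv : v ∉ S) :
    RQ G x (insert v S) ≥ RQ G x S ↔ deltaNode G x S v ≥ RQ G x S := by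
  have hD : 0 < ∑ p ∈ S, x p ^ 2 :=
    Finset.sum_pos (fun p _ => by have := hx p; positivity) hS
  have hb : 0 < x v ^ 2 := by have := hx v; positivity
  have key := edge_sum_insert G x S v hv
  unfold RQ deltaNode
  rw [Finset.sum_insert hv]
  simp only [ge_iff_le]
  rw [div_le_div_iff₀ hD (by positivity), div_le_div_iff₀ hD hb]
  rw [key]
  constructor <;> intro h <;> nlinarith
end

section
/- Let S ⊆ V be nonempty and let T* ⊆ V ∖ S be a nonempty set such that Δ_S(T*) > RQ(S) and Δ_S(T*) ≥ Δ_S(T) for every nonempty T ⊆ V ∖ S. Then for every subset T' ⊆ V ∖ S one has Δ_S(T*) > RQ(S ∪ T'). -/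
open scoped Classical

theorem num_union_aux {V : Type*} [Fintype V] [DecidableEq V]
    (G : SimpleGraph V) (x : V → ℝ) (S T : Finset V) (h : Disjoint T S) :
    ∑ e ∈ G.edgeFinset.filter (fun e => ∀ v ∈ e, v ∈ S ∪ T), edgeVal x e =
      (∑ e ∈ G.edgeFinset.filter (fun e => ∀ v ∈ e, v ∈ S), edgeVal x e) +
      ((∑ v ∈ T, ∑ r ∈ S.filter (fun r => G.Adj v r), (x v - x r) ^ 2) +
        ∑ e ∈ G.edgeFinset.filter (fun e => ∀ w ∈ e, w ∈ T), edgeVal x e) := by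
  have hd : ∀ v, v ∈ T → v ∈ S → False := fun v h1 h2 => Finset.disjoint_left.mp h h1 h2
  have hc : (∑ v ∈ T, ∑ r ∈ S.filter (fun r => G.Adj v r), (x v - x r) ^ 2) =
      ∑ e ∈ (T.sigma (fun v => S.filter (fun r => G.Adj v r))).image
        (fun p => s(p.1, p.2)), edgeVal x e := by
    rw [Finset.sum_image, Finset.sum_sigma]
    · rfl
    · rintro ⟨a, b⟩ h1 ⟨c, d⟩ h2 h3
      simp only [Finset.coe_sigma, Set.mem_sigma_iff, Finset.mem_coe, Finset.mem_filter] at h1 h2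
      simp only [Sym2.eq_iff] at h3
      rcases h3 with ⟨rfl, rfl⟩ | ⟨rfl, rfl⟩
      · rfl
      · exact (hd _ h1.1 h2.2.1).elim
  rw [hc, ← Finset.sum_union, ← Finset.sum_union]
  · apply Finset.sum_congr _ (fun _ _ => rfl)
    ext e
    induction e using Sym2.ind with
    | _ a b =>
      simp only [Finset.mem_filter, Finset.mem_union, Finset.mem_image, Finset.mem_sigma,
        Sigma.exists, SimpleGraph.mem_edgeFinset, SimpleGraph.mem_edgeSet, Sym2.mem_iff,
        forall_eq_or_imp, forall_eq, Sym2.eq_iff]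
      constructor
      · rintro ⟨hab, ha | ha, hb | hb⟩
        · exact Or.inl ⟨hab, ha, hb⟩
        · exact Or.inr (Or.inl ⟨b, a, ⟨hb, ha, hab.symm⟩, Or.inr ⟨rfl, rfl⟩⟩)
        · exact Or.inr (Or.inl ⟨a, b, ⟨ha, hb, hab⟩, Or.inl ⟨rfl, rfl⟩⟩)
        · exact Or.inr (Or.inr ⟨hab, ha, hb⟩)
      · rintro (⟨hab, ha, hb⟩ | ⟨c, d, ⟨hc, hd, hcd⟩, ⟨rfl, rfl⟩ | ⟨rfl, rfl⟩⟩ | ⟨hab, ha, hb⟩)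
        · exact ⟨hab, Or.inl ha, Or.inl hb⟩
        · exact ⟨hcd, Or.inr hc, Or.inl hd⟩
        · exact ⟨hcd.symm, Or.inl hd, Or.inr hc⟩
        · exact ⟨hab, Or.inr ha, Or.inr hb⟩
  · rw [Finset.disjoint_left]
    intro e
    induction e using Sym2.ind with
    | _ a b =>
      simp only [Finset.mem_filter, Finset.mem_union, Finset.mem_image, Finset.mem_sigma,
        Sigma.exists, SimpleGraph.mem_edgeFinset, SimpleGraph.mem_edgeSet, Sym2.mem_iff,
        forall_eq_or_imp, forall_eq, Sym2.eq_iff]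
      rintro ⟨hab, ha, hb⟩ (⟨c, d, ⟨hc, hd', hcd⟩, ⟨rfl, rfl⟩ | ⟨rfl, rfl⟩⟩ | ⟨-, ha', hb'⟩)
      · exact hd _ hc ha
      · exact hd _ hc hb
      · exact hd _ ha' ha
  · rw [Finset.disjoint_left]
    intro e
    induction e using Sym2.ind with
    | _ a b =>
      simp only [Finset.mem_filter, Finset.mem_image, Finset.mem_sigma,
        Sigma.exists, SimpleGraph.mem_edgeFinset, SimpleGraph.mem_edgeSet, Sym2.mem_iff,
        forall_eq_or_imp, forall_eq, Sym2.eq_iff]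
      rintro ⟨c, d, ⟨hc, hd', hcd⟩, ⟨rfl, rfl⟩ | ⟨rfl, rfl⟩⟩ ⟨-, ha', hb'⟩
      · exact hd _ hb' hd'
      · exact hd _ ha' hd'

/-- **Inequality (A.14) of Theorem 2.** If `T*` is a nonempty set disjoint from `S`
with `Δ_S(T*) > RQ(S)` and `Δ_S(T*)` maximal among all nonempty sets disjoint from `S`,
then `Δ_S(T*)` strictly dominates the Rayleigh quotient of every extension `S ∪ T'`. -/
theorem deltaMax_gt_rq_extension {V : Type*} [Fintype V] [DecidableEq V]
    (G : SimpleGraph V) (x : V → ℝ) (hx : ∀ v, x v ≠ 0)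
    (S : Finset V) (hS : S.Nonempty)
    (Tstar : Finset V) (hTstar : Tstar.Nonempty) (hTdisj : Disjoint Tstar S)
    (hgt : deltaSet G x S Tstar > RQ G x S)
    (hmax : ∀ T : Finset V, T.Nonempty → Disjoint T S →
      deltaSet G x S Tstar ≥ deltaSet G x S T) :
    ∀ T' : Finset V, Disjoint T' S →
      deltaSet G x S Tstar > RQ G x (S ∪ T') := by
  intro T' hT'
  have pos : ∀ A : Finset V, A.Nonempty → 0 < ∑ p ∈ A, x p ^ 2 := fun A hA =>
    Finset.sum_pos (fun p _ => by have := hx p; positivity) hA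
  rcases T'.eq_empty_or_nonempty with rfl | hne
  · simpa using hgt
  · have h2 := hmax T' hne hT'
    generalize deltaSet G x S Tstar = D at *
    unfold RQ at hgt ⊢
    unfold deltaSet at h2
    have p1 := pos S hS
    have p2 := pos T' hne
    rw [num_union_aux G x S T' hT', Finset.sum_union hT'.symm, gt_iff_lt,
      div_lt_iff₀ (by linarith)]
    rw [gt_iff_lt, div_lt_iff₀ p1] at hgt
    rw [ge_iff_le, div_le_iff₀ p2] at h2
    linarith
end

section
/- Let S ⊆ V be nonempty and let T* ⊆ V ∖ S be a nonempty set such that Δ_S(T*) > RQ(S) and Δ_S(T*) ≥ Δ_S(T) for every nonempty T ⊆ V ∖ S. Then for every subset V' ⊆ V ∖ (S ∪ T*), adding T* strictly increases the Rayleigh quotient: RQ(S ∪ V' ∪ T*) > RQ(S ∪ V'). -/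
open scoped Classical

theorem edgeSum_union {V : Type*} [Fintype V] [DecidableEq V]
    (G : SimpleGraph V) (x : V → ℝ) (A B : Finset V) (h : Disjoint B A) :
    (∑ e ∈ G.edgeFinset.filter (fun e => ∀ v ∈ e, v ∈ A ∪ B), edgeVal x e) =
      (∑ e ∈ G.edgeFinset.filter (fun e => ∀ v ∈ e, v ∈ A), edgeVal x e) +
      ((∑ v ∈ B, ∑ r ∈ A.filter (fun r => G.Adj v r), (x v - x r) ^ 2) +
      ∑ e ∈ G.edgeFinset.filter (fun e => ∀ v ∈ e, v ∈ B), edgeVal x e) := by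
  have hd : ∀ v, v ∈ B → v ∈ A → False := fun v h1 h2 => Finset.disjoint_left.mp h h1 h2
  have hc : (∑ v ∈ B, ∑ r ∈ A.filter (fun r => G.Adj v r), (x v - x r) ^ 2) =
      ∑ e ∈ G.edgeFinset.filter (fun e => (∃ v ∈ e, v ∈ B) ∧ (∃ v ∈ e, v ∈ A) ∧
        ∀ v ∈ e, v ∈ A ∪ B), edgeVal x e := by
    rw [Finset.sum_sigma']
    refine Finset.sum_bij (fun p _ => s(p.1, p.2)) ?_ ?_ ?_ ?_
    · rintro ⟨v, r⟩ hp
      simp only [Finset.mem_sigma, Finset.mem_filter] at hp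
      simp [hp]
    · rintro ⟨v, r⟩ hp ⟨v', r'⟩ hp' he
      simp only [Finset.mem_sigma, Finset.mem_filter] at hp hp'
      simp only [Sym2.eq_iff] at he
      rcases he with ⟨rfl, rfl⟩ | ⟨rfl, rfl⟩
      · rfl
      · exact (hd _ hp.1 hp'.2.1).elim
    · intro e he
      induction e using Sym2.ind with
      | _ a b =>
        simp only [Finset.mem_filter, SimpleGraph.mem_edgeFinset, SimpleGraph.mem_edgeSet,
          Sym2.mem_iff, exists_eq_or_imp, exists_eq_left] at he
        obtain ⟨hab, h1, h2, -⟩ := he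
        by_cases ha : a ∈ B
        · have hb : b ∈ A := h2.resolve_left (fun h => hd _ ha h)
          exact ⟨⟨a, b⟩, by simp [ha, hb, hab], rfl⟩
        · have hb : b ∈ B := h1.resolve_left ha
          have ha : a ∈ A := h2.resolve_right (fun h => hd _ hb h)
          exact ⟨⟨b, a⟩, by simp [ha, hb, hab.symm], Sym2.eq_swap⟩
    · rintro ⟨v, r⟩ hp
      rfl
  rw [hc]
  simp only [Finset.sum_filter]
  rw [← Finset.sum_add_distrib, ← Finset.sum_add_distrib]
  refine Finset.sum_congr rfl ?_
  intro e he
  induction e using Sym2.ind with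
  | _ a b =>
    have h1 := hd a
    have h2 := hd b
    simp only [Sym2.mem_iff, exists_eq_or_imp, exists_eq_left, forall_eq_or_imp, forall_eq,
      Finset.mem_union]
    by_cases a ∈ A <;> by_cases a ∈ B <;> by_cases b ∈ A <;> by_cases b ∈ B <;> simp_all

theorem mass_pos {V : Type*} (x : V → ℝ) (hx : ∀ v, x v ≠ 0)
    (S : Finset V) (hS : S.Nonempty) : 0 < ∑ p ∈ S, x p ^ 2 :=
  Finset.sum_pos (fun v _ => by have := hx v; positivity) hS

/-- **Core of the proof of Theorem 2.** If `T*` is a nonempty set disjoint from `S` with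
`Δ_S(T*) > RQ(S)` and `Δ_S(T*)` maximal among all nonempty sets disjoint from `S`, then
adding `T*` strictly increases the Rayleigh quotient of every extension `S ∪ V'` of `S`
disjoint from `T*`. -/
theorem deltaMax_improves_extension {V : Type*} [Fintype V] [DecidableEq V]
    (G : SimpleGraph V) (x : V → ℝ) (hx : ∀ v, x v ≠ 0)
    (S : Finset V) (hS : S.Nonempty)
    (Tstar : Finset V) (hTstar : Tstar.Nonempty) (hTdisj : Disjoint Tstar S)
    (hgt : deltaSet G x S Tstar > RQ G x S)
    (hmax : ∀ T : Finset V, T.Nonempty → Disjoint T S →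
      deltaSet G x S Tstar ≥ deltaSet G x S T) :
    ∀ V' : Finset V, Disjoint V' S → Disjoint V' Tstar →
      RQ G x (S ∪ V' ∪ Tstar) > RQ G x (S ∪ V') := by
  intro V' hV hVT
  have mS := mass_pos x hx S hS
  have mT := mass_pos x hx Tstar hTstar
  have mSV := mass_pos x hx (S ∪ V') (hS.mono Finset.subset_union_left)
  have hdT : Disjoint Tstar (S ∪ V') := Finset.disjoint_union_right.mpr ⟨hTdisj, hVT.symm⟩
  have key : RQ G x (S ∪ V') < deltaSet G x S Tstar := by
    rcases V'.eq_empty_or_nonempty with rfl | hne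
    · simpa using hgt
    have mV := mass_pos x hx V' hne
    have h1 := hmax V' hne hV
    generalize deltaSet G x S Tstar = d at *
    rw [RQ, div_lt_iff₀ mSV, edgeSum_union G x S V' hV, Finset.sum_union hV.symm]
    rw [gt_iff_lt, RQ, div_lt_iff₀ mS] at hgt
    rw [ge_iff_le, deltaSet, div_le_iff₀ mV] at h1
    linarith
  have hcross : (∑ v ∈ Tstar, ∑ r ∈ S.filter (fun r => G.Adj v r), (x v - x r) ^ 2) ≤
      ∑ v ∈ Tstar, ∑ r ∈ (S ∪ V').filter (fun r => G.Adj v r), (x v - x r) ^ 2 := by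
    refine Finset.sum_le_sum fun v _ => ?_
    exact Finset.sum_le_sum_of_subset_of_nonneg
      (Finset.filter_subset_filter _ Finset.subset_union_left) (fun _ _ _ => sq_nonneg _)
  have hN : RQ G x (S ∪ V') * (∑ p ∈ S ∪ V', x p ^ 2) =
      ∑ e ∈ G.edgeFinset.filter (fun e => ∀ v ∈ e, v ∈ S ∪ V'), edgeVal x e :=
    div_mul_cancel₀ _ mSV.ne'
  generalize RQ G x (S ∪ V') = q at *
  rw [deltaSet, lt_div_iff₀ mT] at key
  rw [gt_iff_lt, RQ, edgeSum_union G x (S ∪ V') Tstar hdT, Finset.sum_union hdT.symm,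
    lt_div_iff₀ (by linarith), ← hN]
  linarith
end

section
/- Let S ⊆ V be nonempty and let T* ⊆ V ∖ S be a nonempty set such that Δ_S(T*) > RQ(S) and Δ_S(T*) ≥ Δ_S(T) for every nonempty T ⊆ V ∖ S. If S* is a set with S ⊆ S* ⊆ V such that RQ(S*) ≥ RQ(U) for every U with S ⊆ U ⊆ V, then S* ∩ T* ≠ ∅. -/
open scoped Classical

/-- Numerator of `RQ`. -/
noncomputable def numRQ {V : Type*} [Fintype V] [DecidableEq V]
    (G : SimpleGraph V) (x : V → ℝ) (S : Finset V) : ℝ :=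
  ∑ e ∈ G.edgeFinset.filter (fun e => ∀ v ∈ e, v ∈ S), edgeVal x e

/-- Cross-edge sum. -/
noncomputable def crossSum {V : Type*} [Fintype V] [DecidableEq V]
    (G : SimpleGraph V) (x : V → ℝ) (S T : Finset V) : ℝ :=
  ∑ v ∈ T, ∑ r ∈ S.filter (fun r => G.Adj v r), (x v - x r) ^ 2

theorem numRQ_union {V : Type*} [Fintype V] [DecidableEq V]
    (G : SimpleGraph V) (x : V → ℝ) (A B : Finset V) (h : Disjoint B A) :
    numRQ G x (A ∪ B) = numRQ G x A + (crossSum G x A B + numRQ G x B) := by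
  have hd : ∀ v, v ∈ B → v ∉ A := fun v hv hv' => Finset.disjoint_left.mp h hv hv'
  have hc : crossSum G x A B =
      ∑ e ∈ ((B ×ˢ A).filter (fun p => G.Adj p.1 p.2)).image (fun p => s(p.1, p.2)),
        edgeVal x e := by
    rw [Finset.sum_image]
    · rw [crossSum, Finset.sum_filter, Finset.sum_product]
      refine Finset.sum_congr rfl fun v _ => ?_
      rw [Finset.sum_filter]
      rfl
    · rintro ⟨a, b⟩ h1 ⟨c, d⟩ h2 h3
      simp only [Finset.coe_filter, Finset.mem_product, Set.mem_setOf_eq] at h1 h2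
      simp only [Sym2.eq_iff] at h3
      rcases h3 with ⟨rfl, rfl⟩ | ⟨rfl, rfl⟩
      · rfl
      · exact (hd _ h1.1.1 h2.1.2).elim
  rw [hc]
  unfold numRQ
  rw [← Finset.sum_union, ← Finset.sum_union]
  · refine Finset.sum_congr ?_ fun _ _ => rfl
    ext e
    induction e using Sym2.ind with
    | _ a b =>
    simp only [Finset.mem_filter, Finset.mem_union, Finset.mem_image, Finset.mem_product,
      Prod.exists, SimpleGraph.mem_edgeFinset, SimpleGraph.mem_edgeSet, Sym2.mem_iff,
      forall_eq_or_imp, forall_eq, Sym2.eq_iff]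
    constructor
    · rintro ⟨hab, ha | ha, hb | hb⟩
      · exact Or.inl ⟨hab, ha, hb⟩
      · exact Or.inr (Or.inl ⟨b, a, ⟨⟨hb, ha⟩, hab.symm⟩, Or.inr ⟨rfl, rfl⟩⟩)
      · exact Or.inr (Or.inl ⟨a, b, ⟨⟨ha, hb⟩, hab⟩, Or.inl ⟨rfl, rfl⟩⟩)
      · exact Or.inr (Or.inr ⟨hab, ha, hb⟩)
    · rintro (⟨hab, ha, hb⟩ | ⟨c, d, ⟨⟨hc, hd⟩, hcd⟩, ⟨rfl, rfl⟩ | ⟨rfl, rfl⟩⟩ | ⟨hab, ha, hb⟩)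
      · exact ⟨hab, Or.inl ha, Or.inl hb⟩
      · exact ⟨hcd, Or.inr hc, Or.inl hd⟩
      · exact ⟨hcd.symm, Or.inl hd, Or.inr hc⟩
      · exact ⟨hab, Or.inr ha, Or.inr hb⟩
  · rw [Finset.disjoint_left]
    intro e
    induction e using Sym2.ind with
    | _ a b =>
    simp only [Finset.mem_filter, Finset.mem_union, Finset.mem_image, Finset.mem_product,
      Prod.exists, Sym2.mem_iff, forall_eq_or_imp, forall_eq, Sym2.eq_iff]
    rintro ⟨_, ha, hb⟩ (⟨c, d, ⟨⟨hc, _⟩, _⟩, ⟨rfl, rfl⟩ | ⟨rfl, rfl⟩⟩ | ⟨_, ha', _⟩)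
    · exact hd _ hc ha
    · exact hd _ hc hb
    · exact hd _ ha' ha
  · rw [Finset.disjoint_left]
    intro e
    induction e using Sym2.ind with
    | _ a b =>
    simp only [Finset.mem_filter, Finset.mem_image, Finset.mem_product,
      Prod.exists, Sym2.mem_iff, forall_eq_or_imp, forall_eq, Sym2.eq_iff]
    rintro ⟨c, d, ⟨⟨_, hA⟩, _⟩, ⟨rfl, rfl⟩ | ⟨rfl, rfl⟩⟩ ⟨_, ha, hb⟩
    · exact hd _ hb hA
    · exact hd _ ha hA

theorem crossSum_mono {V : Type*} [Fintype V] [DecidableEq V]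
    (G : SimpleGraph V) (x : V → ℝ) {A A' : Finset V} (B : Finset V) (h : A ⊆ A') :
    crossSum G x A B ≤ crossSum G x A' B :=
  Finset.sum_le_sum fun _ _ => Finset.sum_le_sum_of_subset_of_nonneg
    (Finset.filter_subset_filter _ h) fun _ _ _ => sq_nonneg _

/-- **Consequence of Theorem 2.** If `T*` is a nonempty set disjoint from `S` with
`Δ_S(T*) > RQ(S)` and `Δ_S(T*)` maximal among all nonempty sets disjoint from `S`,
then any maximizer `S*` of the Rayleigh quotient among supersets of `S`
must intersect `T*`. -/
theorem maximizer_meets_deltaMax {V : Type*} [Fintype V] [DecidableEq V]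
    (G : SimpleGraph V) (x : V → ℝ) (hx : ∀ v, x v ≠ 0)
    (S : Finset V) (hS : S.Nonempty)
    (Tstar : Finset V) (hTstar : Tstar.Nonempty) (hTdisj : Disjoint Tstar S)
    (hgt : deltaSet G x S Tstar > RQ G x S)
    (hmax : ∀ T : Finset V, T.Nonempty → Disjoint T S →
      deltaSet G x S Tstar ≥ deltaSet G x S T)
    (Sstar : Finset V) (hSsub : S ⊆ Sstar)
    (hopt : ∀ U : Finset V, S ⊆ U → RQ G x Sstar ≥ RQ G x U) :
    (Sstar ∩ Tstar).Nonempty := by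
  by_contra hne
  have hint : Sstar ∩ Tstar = ∅ := Finset.not_nonempty_iff_eq_empty.mp hne
  have hdis : Disjoint Tstar Sstar := (Finset.disjoint_iff_inter_eq_empty.mpr hint).symm
  have mpos : ∀ A : Finset V, A.Nonempty → 0 < ∑ v ∈ A, x v ^ 2 := fun A hA =>
    Finset.sum_pos (fun v _ => by have := hx v; positivity) hA
  have hRQ : ∀ A : Finset V, RQ G x A = numRQ G x A / ∑ v ∈ A, x v ^ 2 := fun _ => rfl
  have hDe : ∀ A : Finset V, deltaSet G x S A =
    (crossSum G x S A + numRQ G x A) / ∑ v ∈ A, x v ^ 2 := fun _ => rfl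
  have hSs : Sstar.Nonempty := hS.mono hSsub
  have hDT := hDe Tstar
  generalize deltaSet G x S Tstar = D at *
  rw [eq_div_iff (mpos _ hTstar).ne'] at hDT
  have hlt : RQ G x Sstar < D := by
    rw [hRQ, gt_iff_lt, div_lt_iff₀ (mpos _ hS)] at hgt
    rcases (Sstar \ S).eq_empty_or_nonempty with h0 | h0
    · have : Sstar = S := (Finset.sdiff_eq_empty_iff_subset.mp h0).antisymm hSsub
      rw [this, hRQ, div_lt_iff₀ (mpos _ hS)]
      exact hgt
    · have h1 := hmax _ h0 Finset.sdiff_disjoint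
      rw [hDe, ge_iff_le, div_le_iff₀ (mpos _ h0)] at h1
      have h2 := numRQ_union G x S (Sstar \ S) Finset.sdiff_disjoint
      rw [Finset.union_sdiff_of_subset hSsub] at h2
      have h3 := Finset.sum_sdiff (f := fun v => x v ^ 2) hSsub
      rw [hRQ, div_lt_iff₀ (mpos _ hSs), ← h3, h2, mul_add]
      linarith
  have hU := hopt (Sstar ∪ Tstar) (hSsub.trans Finset.subset_union_left)
  have hm : ∑ v ∈ Sstar ∪ Tstar, x v ^ 2 = ∑ v ∈ Sstar, x v ^ 2 + ∑ v ∈ Tstar, x v ^ 2 :=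
    Finset.sum_union hdis.symm
  have hRs := hRQ Sstar
  rw [eq_div_iff (mpos _ hSs).ne'] at hRs
  rw [hRQ (Sstar ∪ Tstar), ge_iff_le, div_le_iff₀ (mpos _ (hSs.mono Finset.subset_union_left)),
    numRQ_union G x _ _ hdis, hm, mul_add] at hU
  have hmono := crossSum_mono G x Tstar hSsub
  have := mul_lt_mul_of_pos_right hlt (mpos _ hTstar)
  linarith
end

section
/- Let S ⊆ V be nonempty. For every nonempty T ⊆ V ∖ S there exists a nonempty T' ⊆ T such that the subgraph of G induced on T' is connected and Δ_S(T') ≥ Δ_S(T). Consequently, the maximum of Δ_S over nonempty subsets of V ∖ S is attained on a subset whose induced subgraph is connected. -/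
open scoped Classical

/-- Splitting `T` into two parts with no edges between them: one part does at least as well. -/
theorem deltaSet_split {V : Type*} [Fintype V] [DecidableEq V]
    (G : SimpleGraph V) (x : V → ℝ) (hx : ∀ v, x v ≠ 0) (S A B : Finset V)
    (hA : A.Nonempty) (hB : B.Nonempty) (hd : Disjoint A B)
    (hAB : ∀ a ∈ A, ∀ b ∈ B, ¬ G.Adj a b) :
    deltaSet G x S (A ∪ B) ≤ deltaSet G x S A ∨ deltaSet G x S (A ∪ B) ≤ deltaSet G x S B := by
  have pos : ∀ T : Finset V, T.Nonempty → 0 < ∑ v ∈ T, x v ^ 2 := fun T hT =>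
    Finset.sum_pos (fun v _ => by have := hx v; positivity) hT
  have pA := pos A hA
  have pB := pos B hB
  have he : G.edgeFinset.filter (fun e => ∀ w ∈ e, w ∈ A ∪ B) =
      G.edgeFinset.filter (fun e => ∀ w ∈ e, w ∈ A) ∪
      G.edgeFinset.filter (fun e => ∀ w ∈ e, w ∈ B) := by
    ext e
    induction e using Sym2.ind with
    | _ p q =>
      have h1 := hAB p
      have h2 := hAB q
      have h3 := G.adj_comm p q
      simp only [Finset.mem_filter, Finset.mem_union, SimpleGraph.mem_edgeFinset,
        SimpleGraph.mem_edgeSet, Sym2.mem_iff, forall_eq_or_imp, forall_eq]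
      grind
  have hdis : Disjoint (G.edgeFinset.filter (fun e => ∀ w ∈ e, w ∈ A))
      (G.edgeFinset.filter (fun e => ∀ w ∈ e, w ∈ B)) := by
    rw [Finset.disjoint_left]
    intro e
    induction e using Sym2.ind with
    | _ p q =>
      intro h1 h2
      exact Finset.disjoint_left.mp hd ((Finset.mem_filter.mp h1).2 p (Sym2.mem_mk_left p q))
        ((Finset.mem_filter.mp h2).2 p (Sym2.mem_mk_left p q))
  unfold deltaSet
  rw [he, Finset.sum_union hdis, Finset.sum_union hd, Finset.sum_union hd]
  generalize (∑ v ∈ A, x v ^ 2) = a at *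
  generalize (∑ v ∈ B, x v ^ 2) = b at *
  generalize (∑ v ∈ A, ∑ r ∈ S.filter (fun r => G.Adj v r), (x v - x r) ^ 2) = c
  generalize (∑ v ∈ B, ∑ r ∈ S.filter (fun r => G.Adj v r), (x v - x r) ^ 2) = d
  generalize (∑ e ∈ G.edgeFinset.filter (fun e => ∀ w ∈ e, w ∈ A), edgeVal x e) = e
  generalize (∑ e ∈ G.edgeFinset.filter (fun e => ∀ w ∈ e, w ∈ B), edgeVal x e) = f
  rw [div_le_div_iff₀ (by positivity) pA, div_le_div_iff₀ (by positivity) pB]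
  by_contra! h
  obtain ⟨h1, h2⟩ := h
  nlinarith

theorem deltaSet_exists_connected {V : Type*} [Fintype V] [DecidableEq V]
    (G : SimpleGraph V) (x : V → ℝ) (hx : ∀ v, x v ≠ 0) (S : Finset V) (T : Finset V) :
    T.Nonempty → ∃ T' : Finset V, T' ⊆ T ∧ T'.Nonempty ∧
        (G.induce (T' : Set V)).Connected ∧
        deltaSet G x S T' ≥ deltaSet G x S T := by
  induction T using Finset.strongInduction with
  | H T ih =>
  intro hT
  by_cases hc : (G.induce (T : Set V)).Connected
  · exact ⟨T, subset_rfl, hT, hc, le_rfl⟩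
  have : Nonempty (T : Set V) := by obtain ⟨v, hv⟩ := hT; exact ⟨⟨v, hv⟩⟩
  have hp : ¬ (G.induce (T : Set V)).Preconnected := fun h => hc ⟨h⟩
  unfold SimpleGraph.Preconnected at hp
  push Not at hp
  obtain ⟨⟨a, ha⟩, ⟨b, hb⟩, hab⟩ := hp
  let A := T.filter (fun v => ∃ h : v ∈ (T : Set V),
    (G.induce (T : Set V)).Reachable ⟨a, ha⟩ ⟨v, h⟩)
  have haA : a ∈ A := Finset.mem_filter.mpr ⟨ha, ha, SimpleGraph.Reachable.refl _⟩
  have hbA : b ∉ A := fun h => by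
    obtain ⟨_, _, h⟩ := Finset.mem_filter.mp h
    exact hab h
  have hAT : A ⊆ T := Finset.filter_subset _ _
  have hu : A ∪ (T \ A) = T := Finset.union_sdiff_of_subset hAT
  have hbB : b ∈ T \ A := Finset.mem_sdiff.mpr ⟨hb, hbA⟩
  have key := deltaSet_split G x hx S A (T \ A) ⟨a, haA⟩ ⟨b, hbB⟩ Finset.disjoint_sdiff (by
    intro p hpA q hqB hadj
    obtain ⟨_, hpT, hr⟩ := Finset.mem_filter.mp hpA
    obtain ⟨hqT, hqA⟩ := Finset.mem_sdiff.mp hqB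
    apply hqA
    refine Finset.mem_filter.mpr ⟨hqT, hqT, hr.trans ?_⟩
    apply SimpleGraph.Adj.reachable
    exact hadj)
  rw [hu] at key
  rcases key with key | key
  · obtain ⟨T', h1, h2, h3, h4⟩ := ih A
      (Finset.ssubset_iff_subset_ne.mpr ⟨hAT, fun h => hbA (h ▸ hb)⟩) ⟨a, haA⟩
    exact ⟨T', h1.trans hAT, h2, h3, key.trans h4⟩
  · obtain ⟨T', h1, h2, h3, h4⟩ := ih (T \ A)
      (Finset.ssubset_iff_subset_ne.mpr ⟨Finset.sdiff_subset, fun h =>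
        (Finset.mem_sdiff.mp (h.symm ▸ ha : a ∈ T \ A)).2 haA⟩) ⟨b, hbB⟩
    exact ⟨T', h1.trans Finset.sdiff_subset, h2, h3, key.trans h4⟩

/-- **Relaxation to connected nodesets (proof of Theorem 2).** For every nonempty `T`
disjoint from `S` there is a nonempty `T' ⊆ T` inducing a connected subgraph of `G`
with `Δ_S(T') ≥ Δ_S(T)`; consequently, whenever some nonempty set disjoint from `S`
exists, the maximum of `Δ_S` is attained on a set inducing a connected subgraph. -/
theorem deltaSet_connected_relaxation {V : Type*} [Fintype V] [DecidableEq V]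
    (G : SimpleGraph V) (x : V → ℝ) (hx : ∀ v, x v ≠ 0)
    (S : Finset V) (hS : S.Nonempty) :
    (∀ T : Finset V, T.Nonempty → Disjoint T S →
      ∃ T' : Finset V, T' ⊆ T ∧ T'.Nonempty ∧
        (G.induce (T' : Set V)).Connected ∧
        deltaSet G x S T' ≥ deltaSet G x S T) ∧
    (∀ T₀ : Finset V, T₀.Nonempty → Disjoint T₀ S →
      ∃ Tstar : Finset V, Tstar.Nonempty ∧ Disjoint Tstar S ∧
        (G.induce (Tstar : Set V)).Connected ∧
        ∀ T : Finset V, T.Nonempty → Disjoint T S →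
          deltaSet G x S T ≤ deltaSet G x S Tstar) := by
  refine ⟨fun T hT _ => deltaSet_exists_connected G x hx S T hT, fun T₀ h0 hd0 => ?_⟩
  obtain ⟨M, hM, hmax⟩ := Finset.exists_max_image
    (Finset.univ.filter (fun T : Finset V => T.Nonempty ∧ Disjoint T S)) (deltaSet G x S)
    ⟨T₀, Finset.mem_filter.mpr ⟨Finset.mem_univ _, h0, hd0⟩⟩
  obtain ⟨_, hMn, hMd⟩ := Finset.mem_filter.mp hM
  obtain ⟨T', h1, h2, h3, h4⟩ := deltaSet_exists_connected G x hx S M hMn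
  exact ⟨T', h2, Finset.disjoint_of_subset_left h1 hMd, h3, fun T hT hTd =>
    (hmax T (Finset.mem_filter.mpr ⟨Finset.mem_univ _, hT, hTd⟩)).trans h4⟩
end
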